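/- Fix a combinatorial map (V, H, F, opp, tgt, left). Assume: (a) ∂⋆₂v is a cocycle for every v ∈ V; (b) Q is a set of cocycles such that every cocycle is a ℤ-linear combination of finitely many elements of Q ∪ {∂⋆₂v : v ∈ V}. Let m ≥ 3 be an integer, let S ⊆ F be nonempty, let ψ : S → ℤ/mℤ, let x ∈ S, for each y ∈ S\{x} let P_y be a copath from x to y, and assume that for every face y ∈ F there exists a copath from x to y. Then the following are equivalent: (i) there exists φ : F → ℤ/mℤ with φ(y) = ψ(y) for all y ∈ S and φ(left(h)) - φ(left(opp h)) ∈ {1, -1} for every h ∈ H; (ii) there exists a nowhere-zero flow f such that m divides (∂₁f)(v) for every v ∈ V, m divides ⟨f⟩(K) for every K ∈ Q, and ⟨f⟩(P_y) ≡ ψ(y) - ψ(x) (mod m) for each y ∈ S\{x}. (Lemma 6 of the paper, the flow–coloring duality, with the properties of the cohomology basis of an orientable surface stated as explicit hypotheses.) -/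

import Mathlib

/-!
The duality is discrete integration: a colouring `φ` is a potential whose difference across each
half-edge is `f` modulo `m`, and conversely `φ` is recovered by integrating `f` along copaths.

If `f h ≡ Φ (left h) - Φ (left (opp h))` modulo `m` for an integer lift `Φ` of `φ`, then summation
by parts gives `⟨f⟩(K) ≡ Σ_w Φ(w) (∂⋆₁K)(w)` modulo `m` (`pairing_of_potential`). As `2` need not be
invertible modulo `m`, the factor `1/2` is handled in `ℤ`: the error term is `m` times a 1-chain,
whose pairing with `K` is again an integer. The right side vanishes on cocycles, in
particular on `Q` and on the `∂⋆₂v`, for which `⟨f⟩(∂⋆₂v) = (∂₁f)(v)`; on `P_y` it is `Φ(y) - Φ(x)`.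

Conversely, if `m` divides every `(∂₁f)(v)` and every `⟨f⟩(K)`, `K ∈ Q`, then `m` divides `⟨f⟩` on
every cocycle, because `Q` and the `∂⋆₂v` generate them. Hence `⟨f⟩` of a copath from `x` depends
modulo `m` only on its endpoint, and `φ(y) = ψ(x) + ⟨f⟩(copath from x to y)` is well defined.
Extending a copath that ends at `left (opp h)` by the 1-chain `δ_h - δ_{opp h}`, on which `⟨f⟩` is
`f h`, gives a copath that ends at `left h`, so `φ` changes by `f h = ±1`.
-/


open Finset

namespace Paper

variable {V H F : Type*} [Fintype V] [Fintype H] [Fintype F]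
variable [DecidableEq V] [DecidableEq F]

/-- `f` is a 1-chain: antisymmetric under the involution `opp`. -/
def OneChain (opp : H → H) (f : H → ℤ) : Prop :=
  ∀ h, f (opp h) = - f h

/-- `⟨f⟩(K) = (1/2)·Σ_h f(h)·K(h)`; the sum is even when `f` and `K` are 1-chains. -/
def pairing (f K : H → ℤ) : ℤ := (∑ h, f h * K h) / 2

/-- `⟨f⟩⁺(K) = Σ_{h : f(h) > 0, K(h) > 0} f(h)·K(h)`. -/
def transplus (f K : H → ℤ) : ℤ :=
  ∑ h, if 0 < f h ∧ 0 < K h then f h * K h else 0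

/-- `|K| = (1/2)·Σ_h |K(h)|`; the sum is even when `K` is a 1-chain. -/
def norm1 (K : H → ℤ) : ℤ := (∑ h, |K h|) / 2

/-- The boundary `∂₁ f : V → ℤ` of a 1-chain `f`. -/
def bd1 (tgt : H → V) (f : H → ℤ) (v : V) : ℤ :=
  ∑ h, if tgt h = v then f h else 0

/-- The 1-chain `∂⋆₂ v`. -/
def coB (opp : H → H) (tgt : H → V) (v : V) : H → ℤ :=
  fun h => (if tgt h = v then 1 else 0) - (if tgt (opp h) = v then 1 else 0)

/-- A coboundary: a ℤ-linear combination of the 1-chains `∂⋆₂ v` for `v ∈ V`. -/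
def IsCobound (opp : H → H) (tgt : H → V) (R : H → ℤ) : Prop :=
  ∃ z : V → ℤ, ∀ h, R h = ∑ v, z v * coB opp tgt v h

/-- A 1-cycle: a 1-chain `f` with `∂₁ f = 0`. -/
def OneCycle (opp : H → H) (tgt : H → V) (f : H → ℤ) : Prop :=
  OneChain opp f ∧ ∀ v, bd1 tgt f v = 0

/-- A flow: a 1-chain with all values in `{-1, 0, 1}`. -/
def IsFlow (opp : H → H) (f : H → ℤ) : Prop :=
  OneChain opp f ∧ ∀ h, f h = -1 ∨ f h = 0 ∨ f h = 1

/-- A nowhere-zero flow: a 1-chain with all values in `{-1, 1}`. -/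
def IsNZFlow (opp : H → H) (f : H → ℤ) : Prop :=
  OneChain opp f ∧ ∀ h, f h = 1 ∨ f h = -1

/-- `c ⪯ f`: `0 ≤ c(h) ≤ f(h)` for every half-edge `h` with `f(h) ≥ 0`. -/
def Prec (c f : H → ℤ) : Prop :=
  ∀ h, 0 ≤ f h → 0 ≤ c h ∧ c h ≤ f h

/-- An `f`-circulation: a 1-cycle `c` with `c ⪯ f`. -/
def IsCirc (opp : H → H) (tgt : H → V) (f c : H → ℤ) : Prop :=
  OneCycle opp tgt c ∧ Prec c f

/-- `⟨f⟩⁺(K + B⋆)`: the minimum of `⟨f⟩⁺(K + R)` over all coboundaries `R`. -/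
noncomputable def transplusB (opp : H → H) (tgt : H → V) (f K : H → ℤ) : ℤ :=
  sInf {n : ℤ | ∃ R : H → ℤ, IsCobound opp tgt R ∧ n = transplus f (fun h => K h + R h)}

/-- The degree of a vertex: the number of half-edges with target `v`. -/
def degH (tgt : H → V) (v : V) : ℕ := (Finset.univ.filter fun h => tgt h = v).card

/-- `∂⋆₁ K : F → ℤ`. -/
def bdStar1 (left : H → F) (K : H → ℤ) (x : F) : ℤ :=
  ∑ h, if left h = x then K h else 0

/-- A cocycle: a 1-chain `K` with `∂⋆₁ K = 0`. -/
def Cocycle (opp : H → H) (left : H → F) (K : H → ℤ) : Prop :=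
  OneChain opp K ∧ ∀ x, bdStar1 left K x = 0

/-- The 1-chain `∂₂ x`. -/
def bd2 (opp : H → H) (left : H → F) (x : F) : H → ℤ :=
  fun h => (if left h = x then 1 else 0) - (if left (opp h) = x then 1 else 0)

/-- A 1-boundary: a ℤ-linear combination of the 1-chains `∂₂ x` for `x ∈ F`. -/
def IsBoundary1 (opp : H → H) (left : H → F) (b : H → ℤ) : Prop :=
  ∃ z : F → ℤ, ∀ h, b h = ∑ x, z x * bd2 opp left x h

/-- A copath from `x` to `y`: a 1-chain `P` with `∂⋆₁ P = y - x`. -/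
def IsCopath (opp : H → H) (left : H → F) (x y : F) (P : H → ℤ) : Prop :=
  OneChain opp P ∧
  ∀ w, bdStar1 left P w = (if w = y then 1 else 0) - (if w = x then 1 else 0)

section Duality

set_option linter.unusedSectionVars false

/-- The sum defining the pairing of two 1-chains is even: half-edges cancel modulo 2 in pairs
`{h, opp h}`. -/
lemma two_mul_pairing {opp : H → H} (hinv : Function.Involutive opp) (hfp : ∀ h, opp h ≠ h)
    {f K : H → ℤ} (hf : OneChain opp f) (hK : OneChain opp K) :
    2 * pairing f K = ∑ h, f h * K h := by
  have h2 : ((∑ h, f h * K h : ℤ) : ZMod 2) = 0 := by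
    push_cast
    refine Finset.sum_involution (fun h _ => opp h) ?_ (fun h _ _ => hfp h)
      (fun h _ => Finset.mem_univ _) (fun h _ => hinv h)
    intro h _
    rw [hf h, hK h]
    push_cast
    rw [neg_mul_neg]
    exact CharTwo.add_self_eq_zero _
  exact Int.mul_ediv_cancel' ((ZMod.intCast_zmod_eq_zero_iff_dvd _ 2).1 h2)

lemma sum_comp_opp {opp : H → H} (hinv : Function.Involutive opp) (u : H → ℤ) :
    ∑ h, u (opp h) = ∑ h, u h :=
  Equiv.sum_comp hinv.toPerm u

lemma OneChain.sub {opp : H → H} {K L : H → ℤ} (hK : OneChain opp K) (hL : OneChain opp L) :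
    OneChain opp (fun h => K h - L h) := by
  intro h
  simp only [hK h, hL h]
  ring

lemma bdStar1_sub (left : H → F) (K L : H → ℤ) (w : F) :
    bdStar1 left (fun h => K h - L h) w = bdStar1 left K w - bdStar1 left L w := by
  unfold bdStar1
  rw [← Finset.sum_sub_distrib]
  exact Finset.sum_congr rfl fun h _ => by split_ifs <;> simp

lemma pairing_sub {opp : H → H} (hinv : Function.Involutive opp) (hfp : ∀ h, opp h ≠ h)
    {f K L : H → ℤ} (hf : OneChain opp f) (hK : OneChain opp K) (hL : OneChain opp L) :
    pairing f (fun h => K h - L h) = pairing f K - pairing f L := by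
  have h1 := two_mul_pairing hinv hfp hf (hK.sub hL)
  have h2 := two_mul_pairing hinv hfp hf hK
  have h3 := two_mul_pairing hinv hfp hf hL
  simp only [mul_sub, Finset.sum_sub_distrib] at h1
  linarith

/-- `∂₁` is dual to `∂⋆₂` under the pairing. -/
lemma pairing_coB {opp : H → H} (hinv : Function.Involutive opp) (tgt : H → V)
    {f : H → ℤ} (hf : OneChain opp f) (v : V) :
    pairing f (coB opp tgt v) = bd1 tgt f v := by
  have h1 : ∑ h, f h * coB opp tgt v h = 2 * bd1 tgt f v := by
    have h2 : ∑ h, f h * (if tgt (opp h) = v then 1 else 0) = - bd1 tgt f v := by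
      rw [← sum_comp_opp hinv, bd1, ← Finset.sum_neg_distrib]
      refine Finset.sum_congr rfl fun h _ => ?_
      rw [hf h, hinv h]
      split_ifs <;> simp
    simp only [coB, mul_sub, Finset.sum_sub_distrib]
    rw [h2]
    simp only [mul_ite, mul_one, mul_zero, bd1]
    ring
  rw [pairing, h1]
  exact Int.mul_ediv_cancel_left _ two_ne_zero

/-- Summation by parts: if `f` is modulo `m` the difference of a potential `Φ` on faces, then
pairing with `f` is, modulo `m`, evaluation of `Φ` on `∂⋆₁`. -/
lemma pairing_of_potential {opp : H → H}
    (hinv : Function.Involutive opp) (hfp : ∀ h, opp h ≠ h) (left : H → F) {m : ℕ} {f K : H → ℤ}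
    (hm : m ≠ 0) (hf : OneChain opp f) (hK : OneChain opp K) (Φ : F → ℤ)
    (hΦ : ∀ h, (m : ℤ) ∣ f h - (Φ (left h) - Φ (left (opp h)))) :
    (pairing f K : ZMod m) = ((∑ w, Φ w * bdStar1 left K w : ℤ) : ZMod m) := by
  choose k hk using hΦ
  have hm' : (m : ℤ) ≠ 0 := by exact_mod_cast hm
  have hkc : OneChain opp k := by
    intro h
    have h1 := hk h
    have h2 := hk (opp h)
    rw [hinv h, hf h] at h2
    apply mul_left_cancel₀ hm'
    linarith
  have hparts : ∑ w, Φ w * bdStar1 left K w = ∑ h, Φ (left h) * K h := by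
    simp only [bdStar1, Finset.mul_sum]
    rw [Finset.sum_comm]
    refine Finset.sum_congr rfl fun h _ => ?_
    simp
  have hopp : ∑ h, Φ (left (opp h)) * K h = - ∑ h, Φ (left h) * K h := by
    rw [← sum_comp_opp hinv, ← Finset.sum_neg_distrib]
    refine Finset.sum_congr rfl fun h _ => ?_
    rw [hinv h, hK h]
    ring
  have hsum : ∑ h, f h * K h = 2 * ∑ h, Φ (left h) * K h + m * ∑ h, k h * K h := by
    have : ∀ h, f h * K h =
        Φ (left h) * K h - Φ (left (opp h)) * K h + m * (k h * K h) := by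
      intro h
      linear_combination K h * hk h
    simp only [this, Finset.sum_add_distrib, Finset.sum_sub_distrib, hopp, ← Finset.mul_sum]
    ring
  have h1 := two_mul_pairing hinv hfp hf hK
  have h2 := two_mul_pairing hinv hfp hkc hK
  have h3 : pairing f K = ∑ w, Φ w * bdStar1 left K w + m * pairing k K := by
    rw [hparts]
    linarith [congrArg (fun t => (m : ℤ) * t) h2]
  rw [h3]
  simp

/-- Divisibility of the pairing passes from generators to integer combinations. -/
lemma dvd_pairing_of_sum {opp : H → H} (hinv : Function.Involutive opp) (hfp : ∀ h, opp h ≠ h)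
    {f K : H → ℤ} (hf : OneChain opp f) (hK : OneChain opp K) {m : ℤ} {n : ℕ} (cz : Fin n → ℤ)
    (g : Fin n → H → ℤ) (hg : ∀ i, OneChain opp (g i)) (hdvd : ∀ i, m ∣ pairing f (g i))
    (hsum : ∀ h, K h = ∑ i, cz i * g i h) : m ∣ pairing f K := by
  have h1 : 2 * pairing f K = 2 * ∑ i, cz i * pairing f (g i) := by
    rw [two_mul_pairing hinv hfp hf hK]
    simp only [hsum, Finset.mul_sum]
    rw [Finset.sum_comm]
    refine Finset.sum_congr rfl fun i _ => ?_
    have h2 := two_mul_pairing hinv hfp hf (hg i)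
    calc ∑ h, f h * (cz i * g i h) = cz i * ∑ h, f h * g i h := by
          rw [Finset.mul_sum]
          exact Finset.sum_congr rfl fun h _ => by ring
      _ = 2 * (cz i * pairing f (g i)) := by
          rw [← h2]
          ring
  rw [mul_left_cancel₀ two_ne_zero h1]
  exact Finset.dvd_sum fun i _ => (hdvd i).mul_left _

/-- The elementary copath `δ_h - δ_{opp h}` crossing the edge of `h`, from `left (opp h)` to
`left h`. -/
def cross [DecidableEq H] (opp : H → H) (h : H) : H → ℤ :=
  fun e => (if e = h then 1 else 0) - (if e = opp h then 1 else 0)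

lemma cross_oneChain [DecidableEq H] {opp : H → H} (hinv : Function.Involutive opp) (h : H) :
    OneChain opp (cross opp h) := by
  intro e
  have h1 : opp e = h ↔ e = opp h := hinv.eq_iff
  have h2 : opp e = opp h ↔ e = h := hinv.injective.eq_iff
  simp only [cross, h1, h2]
  ring

lemma cross_isCopath [DecidableEq H] {opp : H → H}
    (hinv : Function.Involutive opp) (left : H → F) (h : H) :
    IsCopath opp left (left (opp h)) (left h) (cross opp h) := by
  refine ⟨cross_oneChain hinv h, fun w => ?_⟩
  have hδ : ∀ a : H, bdStar1 left (fun e => if e = a then 1 else 0) w =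
      if w = left a then 1 else 0 := by
    intro a
    rw [bdStar1, Finset.sum_eq_single a]
    · simp [eq_comm]
    · intro e _ he
      simp [he]
    · simp
  unfold cross
  rw [bdStar1_sub, hδ, hδ]

lemma pairing_cross [DecidableEq H] {opp : H → H} {f : H → ℤ} (hf : OneChain opp f) (h : H) :
    pairing f (cross opp h) = f h := by
  have h1 : ∑ e, f e * cross opp h e = 2 * f h := by
    simp only [cross, mul_sub, Finset.sum_sub_distrib, mul_ite, mul_one, mul_zero,
      Finset.sum_ite_eq', Finset.mem_univ, if_true, hf h]
    ring
  rw [pairing, h1]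
  exact Int.mul_ediv_cancel_left _ two_ne_zero

end Duality

theorem statement_12
    (opp : H → H) (tgt : H → V) (left : H → F)
    (hinv : Function.Involutive opp) (hfp : ∀ h, opp h ≠ h)
    (hcoB : ∀ v : V, Cocycle opp left (coB opp tgt v))
    (Q : Set (H → ℤ)) (hQcocyc : ∀ K ∈ Q, Cocycle opp left K)
    (hQgen : ∀ K : H → ℤ, Cocycle opp left K →
      ∃ (n : ℕ) (cz : Fin n → ℤ) (g : Fin n → H → ℤ),
        (∀ i, g i ∈ Q ∨ ∃ v, g i = coB opp tgt v) ∧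
        ∀ h, K h = ∑ i, cz i * g i h)
    (m : ℕ) (hm : 3 ≤ m)
    (S : Finset F) (hS : S.Nonempty) (ψ : F → ZMod m) (x : F) (hx : x ∈ S)
    (P : F → H → ℤ) (hP : ∀ y ∈ S, y ≠ x → IsCopath opp left x y (P y))
    (hcop : ∀ y : F, ∃ P' : H → ℤ, IsCopath opp left x y P') :
    (∃ φ : F → ZMod m, (∀ y ∈ S, φ y = ψ y) ∧
        ∀ h, φ (left h) - φ (left (opp h)) = 1 ∨
          φ (left h) - φ (left (opp h)) = -1) ↔
    (∃ f : H → ℤ, IsNZFlow opp f ∧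
        (∀ v, (m : ℤ) ∣ bd1 tgt f v) ∧
        (∀ K ∈ Q, (m : ℤ) ∣ pairing f K) ∧
        ∀ y ∈ S, y ≠ x → ((pairing f (P y) : ZMod m) = ψ y - ψ x)) := by
  have hm0 : m ≠ 0 := by omega
  constructor
  · rintro ⟨φ, hφS, hφ⟩
    have : Fact (2 < m) := ⟨by omega⟩
    have hne : (-1 : ZMod m) ≠ 1 := ZMod.neg_one_ne_one
    choose Φ hΦ using fun y => ZMod.intCast_surjective (φ y)
    set f : H → ℤ := fun h => if φ (left h) - φ (left (opp h)) = 1 then 1 else -1 with hfdef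
    have hf : OneChain opp f := by
      intro h
      have hsymm : φ (left (opp h)) - φ (left (opp (opp h))) =
          -(φ (left h) - φ (left (opp h))) := by
        rw [hinv h]
        ring
      simp only [hfdef, hsymm]
      rcases hφ h with h1 | h1 <;> simp [h1, hne]
    have hfΦ : ∀ h, (m : ℤ) ∣ f h - (Φ (left h) - Φ (left (opp h))) := by
      intro h
      rw [← ZMod.intCast_zmod_eq_zero_iff_dvd]
      push_cast
      rw [hΦ, hΦ]
      rcases hφ h with h1 | h1 <;> simp [hfdef, h1, hne]
    have hcoc : ∀ K, Cocycle opp left K → (m : ℤ) ∣ pairing f K := by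
      intro K hK
      rw [← ZMod.intCast_zmod_eq_zero_iff_dvd,
        pairing_of_potential hinv hfp left hm0 hf hK.1 Φ hfΦ]
      simp [hK.2]
    refine ⟨f, ⟨hf, fun h => ?_⟩, fun v => ?_, fun K hK => hcoc K (hQcocyc K hK), ?_⟩
    · simp only [hfdef]
      split_ifs <;> simp
    · rw [← pairing_coB hinv tgt hf v]
      exact hcoc _ (hcoB v)
    · intro y hy hyx
      rw [pairing_of_potential hinv hfp left hm0 hf (hP y hy hyx).1 Φ hfΦ]
      simp only [(hP y hy hyx).2, mul_sub, mul_ite, mul_one, mul_zero, Finset.sum_sub_distrib,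
        Finset.sum_ite_eq', Finset.mem_univ, if_true]
      push_cast
      rw [hΦ, hΦ, hφS y hy, hφS x hx]
  · rintro ⟨f, ⟨hf, hf1⟩, hbd, hQ, hPy⟩
    classical
    have hcoc : ∀ K, Cocycle opp left K → (m : ℤ) ∣ pairing f K := by
      intro K hK
      obtain ⟨n, cz, g, hg, hsum⟩ := hQgen K hK
      refine dvd_pairing_of_sum hinv hfp hf hK.1 cz g (fun i => ?_) (fun i => ?_) hsum
      · rcases hg i with h1 | ⟨v, h1⟩
        · exact (hQcocyc _ h1).1
        · rw [h1]
          exact (hcoB v).1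
      · rcases hg i with h1 | ⟨v, h1⟩
        · exact hQ _ h1
        · rw [h1, pairing_coB hinv tgt hf v]
          exact hbd v
    -- `⟨f⟩` modulo `m` depends only on `∂⋆₁`.
    have hindep : ∀ K L, OneChain opp K → OneChain opp L →
        (∀ w, bdStar1 left K w = bdStar1 left L w) →
        (pairing f K : ZMod m) = pairing f L := by
      intro K L hK hL hKL
      have h1 := hcoc (fun h => K h - L h)
        ⟨hK.sub hL, fun w => by rw [bdStar1_sub, hKL, sub_self]⟩
      rw [pairing_sub hinv hfp hf hK hL, ← ZMod.intCast_zmod_eq_zero_iff_dvd] at h1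
      push_cast at h1
      exact sub_eq_zero.1 h1
    choose P' hP' using hcop
    refine ⟨fun y => ψ x + pairing f (P' y), fun y hy => ?_, fun h => ?_⟩
    · by_cases hyx : y = x
      · subst hyx
        have h1 := hcoc (P' y) ⟨(hP' y).1, fun w => by rw [(hP' y).2, sub_self]⟩
        rw [← ZMod.intCast_zmod_eq_zero_iff_dvd] at h1
        simp [h1]
      · have h1 := hindep (P' y) (P y) (hP' y).1 (hP y hy hyx).1
          (fun w => by rw [(hP' y).2, (hP y hy hyx).2])
        simp only [h1, hPy y hy hyx]
        ring
    · have h1 := hindep (fun e => P' (left h) e - P' (left (opp h)) e) (cross opp h)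
        ((hP' _).1.sub (hP' _).1) (cross_oneChain hinv h)
        (fun w => by
          rw [bdStar1_sub, (hP' _).2, (hP' _).2, (cross_isCopath hinv left h).2]
          ring)
      rw [pairing_sub hinv hfp hf (hP' _).1 (hP' _).1, pairing_cross hf h] at h1
      push_cast at h1
      simp only [add_sub_add_left_eq_sub, h1]
      rcases hf1 h with h2 | h2 <;> simp [h2]

end Paper
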